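/- Let (C, γ, Δ, α) be a post-Hom-Lie coalgebra over a field of characteristic 0. Define Δ̃ = Δ + γ and γ̃ = −γ. Then (C, γ̃, Δ̃, α) is again a post-Hom-Lie coalgebra. -/

import Mathlib

open TensorProduct

noncomputable section

variable {F : Type*} [Field F] [CharZero F]
variable {C : Type*} [AddCommGroup C] [Module F C]

/-- The flip `τ : x ⊗ y ↦ y ⊗ x` on `C ⊗ C`. -/
def tw : C ⊗[F] C →ₗ[F] C ⊗[F] C := (TensorProduct.comm F C C).toLinearMap

/-- `(f ⊗ g)` (followed by the associator), for `f : C → C ⊗ C`, `g : C → C`. -/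
def rT (f : C →ₗ[F] C ⊗[F] C) (g : C →ₗ[F] C) :
    C ⊗[F] C →ₗ[F] C ⊗[F] (C ⊗[F] C) :=
  (TensorProduct.assoc F C C C).toLinearMap ∘ₗ TensorProduct.map f g

/-- `(g ⊗ f)` for `g : C → C`, `f : C → C ⊗ C`. -/
def lT (g : C →ₗ[F] C) (f : C →ₗ[F] C ⊗[F] C) :
    C ⊗[F] C →ₗ[F] C ⊗[F] (C ⊗[F] C) :=
  TensorProduct.map g f

/-- `τ ⊗ I` acting on `C ⊗ (C ⊗ C)` (swap of the first two factors). -/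
def sw12 : C ⊗[F] (C ⊗[F] C) →ₗ[F] C ⊗[F] (C ⊗[F] C) :=
  (TensorProduct.assoc F C C C).toLinearMap ∘ₗ
    TensorProduct.map (tw : C ⊗[F] C →ₗ[F] C ⊗[F] C) (LinearMap.id : C →ₗ[F] C) ∘ₗ
    (TensorProduct.assoc F C C C).symm.toLinearMap

/-- The cyclic permutation `ξ : x ⊗ y ⊗ z ↦ y ⊗ z ⊗ x` on `C ⊗ (C ⊗ C)`. -/
def cyc : C ⊗[F] (C ⊗[F] C) →ₗ[F] C ⊗[F] (C ⊗[F] C) :=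
  TensorProduct.map (LinearMap.id : C →ₗ[F] C) (tw : C ⊗[F] C →ₗ[F] C ⊗[F] C) ∘ₗ sw12

/-- Hom-Lie coalgebra axioms for `(C, γ, α)`: skew-cocommutativity,
comultiplicativity, and the Hom-co-Jacobi identity. -/
def IsHomLieCoalgebra (γ : C →ₗ[F] C ⊗[F] C) (α : C →ₗ[F] C) : Prop :=
  (γ = -(tw ∘ₗ γ)) ∧
  (γ ∘ₗ α = TensorProduct.map α α ∘ₗ γ) ∧
  ((LinearMap.id + cyc + cyc ∘ₗ cyc) ∘ₗ (lT α γ ∘ₗ γ) = 0)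

/-- Post-Hom-Lie coalgebra axioms for `(C, γ, Δ, α)`. -/
def IsPostHomLieCoalgebra (γ Δ : C →ₗ[F] C ⊗[F] C) (α : C →ₗ[F] C) : Prop :=
  IsHomLieCoalgebra γ α ∧
  (lT α γ ∘ₗ Δ - rT Δ α ∘ₗ γ - sw12 ∘ₗ (lT α Δ ∘ₗ γ) = 0) ∧
  (rT Δ α ∘ₗ Δ - lT α Δ ∘ₗ Δ - sw12 ∘ₗ (rT Δ α ∘ₗ Δ) +
    sw12 ∘ₗ (lT α Δ ∘ₗ Δ) + rT γ α ∘ₗ Δ = 0)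

/-!
Both post-Hom-Lie axioms are governed by the map
`D(Δ) = (α ⊗ γ)Δ - (Δ ⊗ α)γ - (τ ⊗ I)(α ⊗ Δ)γ`, which is linear in `Δ` and changes sign with `γ`.
For skew `γ` the Hom-co-Jacobi identity says exactly that `D(γ) = 0`, so `D(Δ + γ) = D(Δ) = 0`.
In the second axiom, the coassociator of `Δ + γ`, skew-symmetrized by `1 - (τ ⊗ I)`, acquires
`(γ ⊗ α)γ` from `D(γ) = 0` and `2 (γ ⊗ α)Δ` from the cross terms, the rest of which
`D(Δ) = 0` turns into `-(1 - (τ ⊗ I))(1 + (τ ⊗ I))(α ⊗ Δ)γ = 0`.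
-/

section Field

variable {K : Type*} [Field K] {V : Type*} [AddCommGroup V] [Module K V]

theorem rT_add (f f' : V →ₗ[K] V ⊗[K] V) (g : V →ₗ[K] V) :
    rT (f + f') g = rT f g + rT f' g := by
  rw [rT, TensorProduct.map_add_left, LinearMap.comp_add, rT, rT]

theorem lT_add (g : V →ₗ[K] V) (f f' : V →ₗ[K] V ⊗[K] V) :
    lT g (f + f') = lT g f + lT g f' :=
  TensorProduct.map_add_right g f f'

theorem rT_neg (f : V →ₗ[K] V ⊗[K] V) (g : V →ₗ[K] V) : rT (-f) g = -rT f g := by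
  ext x y
  simp [rT, TensorProduct.neg_tmul]

theorem lT_neg (g : V →ₗ[K] V) (f : V →ₗ[K] V ⊗[K] V) : lT g (-f) = -lT g f := by
  ext x y
  simp [lT, TensorProduct.tmul_neg]

theorem sw12_comp_sw12 :
    (sw12 ∘ₗ sw12 : V ⊗[K] (V ⊗[K] V) →ₗ[K] V ⊗[K] (V ⊗[K] V)) = LinearMap.id := by
  ext x y z
  simp [sw12, tw]

theorem cyc_comp_cyc :
    (cyc ∘ₗ cyc : V ⊗[K] (V ⊗[K] V) →ₗ[K] V ⊗[K] (V ⊗[K] V)) =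
      sw12 ∘ₗ TensorProduct.map LinearMap.id tw := by
  ext x y z
  simp [cyc, sw12, tw]

theorem sw12_comp_rT (f : V →ₗ[K] V ⊗[K] V) (g : V →ₗ[K] V) :
    sw12 ∘ₗ rT f g = rT (tw ∘ₗ f) g := by
  ext x y
  simp [sw12, rT]

theorem map_id_tw_comp_lT (g : V →ₗ[K] V) (f : V →ₗ[K] V ⊗[K] V) :
    TensorProduct.map LinearMap.id tw ∘ₗ lT g f = lT g (tw ∘ₗ f) := by
  ext x y
  simp [lT]

theorem cyc_tmul (x : V) (s : V ⊗[K] V) :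
    cyc (x ⊗ₜ[K] s) = TensorProduct.assoc K V V V (s ⊗ₜ[K] x) := by
  induction s with
  | zero => simp
  | tmul y z => simp [cyc, sw12, tw]
  | add s t hs ht => simp only [TensorProduct.tmul_add, TensorProduct.add_tmul, map_add, hs, ht]

theorem cyc_comp_lT (g : V →ₗ[K] V) (f : V →ₗ[K] V ⊗[K] V) :
    cyc ∘ₗ lT g f = rT f g ∘ₗ tw := by
  ext x y
  simp [lT, rT, tw, cyc_tmul]

/-- The failure of `Δ` to satisfy the mixed axiom
`(α ⊗ γ)Δ = (Δ ⊗ α)γ + (τ ⊗ I)(α ⊗ Δ)γ` of a post-Hom-Lie coalgebra. It is dual to the failure of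
the product to act by twisted derivations of the bracket. -/
def coderivationDefect (γ : V →ₗ[K] V ⊗[K] V) (α : V →ₗ[K] V) (Δ : V →ₗ[K] V ⊗[K] V) :
    V →ₗ[K] V ⊗[K] (V ⊗[K] V) :=
  lT α γ ∘ₗ Δ - rT Δ α ∘ₗ γ - sw12 ∘ₗ (lT α Δ ∘ₗ γ)

/-- The polarized Hom-coassociator `(Δ ⊗ α)Δ' - (α ⊗ Δ)Δ'`; the Hom-coassociator of `Δ` is its
value at `Δ' = Δ`. -/
def homCoassociator (α : V →ₗ[K] V) (Δ Δ' : V →ₗ[K] V ⊗[K] V) :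
    V →ₗ[K] V ⊗[K] (V ⊗[K] V) :=
  rT Δ α ∘ₗ Δ' - lT α Δ ∘ₗ Δ'

/-- The polarized Hom-coassociator skew-symmetrized in the first two tensor factors. Its
vanishing at `Δ' = Δ` is the left Hom-pre-Lie coalgebra identity. -/
def skewCoassociator (α : V →ₗ[K] V) (Δ Δ' : V →ₗ[K] V ⊗[K] V) :
    V →ₗ[K] V ⊗[K] (V ⊗[K] V) :=
  (LinearMap.id - sw12) ∘ₗ homCoassociator α Δ Δ'

theorem coderivationDefect_add (γ : V →ₗ[K] V ⊗[K] V) (α : V →ₗ[K] V)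
    (Δ Δ' : V →ₗ[K] V ⊗[K] V) :
    coderivationDefect γ α (Δ + Δ') = coderivationDefect γ α Δ + coderivationDefect γ α Δ' := by
  simp only [coderivationDefect, rT_add, lT_add, LinearMap.add_comp, LinearMap.comp_add]
  abel

theorem coderivationDefect_neg_left (γ : V →ₗ[K] V ⊗[K] V) (α : V →ₗ[K] V)
    (Δ : V →ₗ[K] V ⊗[K] V) :
    coderivationDefect (-γ) α Δ = -coderivationDefect γ α Δ := by
  simp only [coderivationDefect, lT_neg, LinearMap.neg_comp, LinearMap.comp_neg]
  abel

theorem skewCoassociator_add_add (α : V →ₗ[K] V) (Δ Δ' : V →ₗ[K] V ⊗[K] V) :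
    skewCoassociator α (Δ + Δ') (Δ + Δ') =
      skewCoassociator α Δ Δ + skewCoassociator α Δ' Δ' +
        (skewCoassociator α Δ Δ' + skewCoassociator α Δ' Δ) := by
  simp only [skewCoassociator, homCoassociator, rT_add, lT_add, LinearMap.add_comp,
    LinearMap.comp_add, LinearMap.comp_sub]
  abel

theorem isPostHomLieCoalgebra_iff {γ Δ : V →ₗ[K] V ⊗[K] V} {α : V →ₗ[K] V} :
    IsPostHomLieCoalgebra γ Δ α ↔
      IsHomLieCoalgebra γ α ∧ coderivationDefect γ α Δ = 0 ∧
        skewCoassociator α Δ Δ + rT γ α ∘ₗ Δ = 0 := by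
  have skew_eq : skewCoassociator α Δ Δ =
      rT Δ α ∘ₗ Δ - lT α Δ ∘ₗ Δ - sw12 ∘ₗ (rT Δ α ∘ₗ Δ) + sw12 ∘ₗ (lT α Δ ∘ₗ Δ) := by
    simp only [skewCoassociator, homCoassociator, LinearMap.sub_comp, LinearMap.comp_sub,
      LinearMap.id_comp]
    abel
  rw [skew_eq]
  rfl

section Skew

variable {γ : V →ₗ[K] V ⊗[K] V} {α : V →ₗ[K] V}

theorem id_sub_sw12_comp_rT_comp_of_skew (hγ : tw ∘ₗ γ = -γ) (Δ : V →ₗ[K] V ⊗[K] V) :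
    (LinearMap.id - sw12) ∘ₗ (rT γ α ∘ₗ Δ) = rT γ α ∘ₗ Δ + rT γ α ∘ₗ Δ := by
  rw [← LinearMap.comp_assoc, LinearMap.sub_comp, sw12_comp_rT, hγ, rT_neg, LinearMap.id_comp,
    sub_neg_eq_add, LinearMap.add_comp]

theorem homCoJacobi_eq_coderivationDefect (hγ : tw ∘ₗ γ = -γ) :
    (LinearMap.id + cyc + cyc ∘ₗ cyc) ∘ₗ (lT α γ ∘ₗ γ) = coderivationDefect γ α γ := by
  have cyc_term : cyc ∘ₗ (lT α γ ∘ₗ γ) = -(rT γ α ∘ₗ γ) := by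
    rw [← LinearMap.comp_assoc, cyc_comp_lT, LinearMap.comp_assoc, hγ, LinearMap.comp_neg]
  have cyc_sq_term : (cyc ∘ₗ cyc) ∘ₗ (lT α γ ∘ₗ γ) = -(sw12 ∘ₗ (lT α γ ∘ₗ γ)) := by
    rw [cyc_comp_cyc, LinearMap.comp_assoc, ← LinearMap.comp_assoc γ, map_id_tw_comp_lT, hγ,
      lT_neg, LinearMap.neg_comp, LinearMap.comp_neg]
  rw [LinearMap.add_comp, LinearMap.add_comp, LinearMap.id_comp, cyc_term, cyc_sq_term,
    coderivationDefect, sub_eq_add_neg, sub_eq_add_neg]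

theorem skewCoassociator_self_of_skew (hγ : tw ∘ₗ γ = -γ) (hγγ : coderivationDefect γ α γ = 0) :
    skewCoassociator α γ γ = rT γ α ∘ₗ γ := by
  calc skewCoassociator α γ γ
      = rT γ α ∘ₗ γ - coderivationDefect γ α γ := by
        rw [skewCoassociator, homCoassociator, LinearMap.comp_sub,
          id_sub_sw12_comp_rT_comp_of_skew hγ, LinearMap.sub_comp, LinearMap.id_comp,
          coderivationDefect]
        abel
    _ = rT γ α ∘ₗ γ := by rw [hγγ, sub_zero]

theorem skewCoassociator_add_swap_of_skew {Δ : V →ₗ[K] V ⊗[K] V} (hγ : tw ∘ₗ γ = -γ)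
    (hΔ : coderivationDefect γ α Δ = 0) :
    skewCoassociator α Δ γ + skewCoassociator α γ Δ = rT γ α ∘ₗ Δ + rT γ α ∘ₗ Δ := by
  have coderivation : lT α γ ∘ₗ Δ = rT Δ α ∘ₗ γ + sw12 ∘ₗ (lT α Δ ∘ₗ γ) := by
    rwa [coderivationDefect, sub_sub, sub_eq_zero] at hΔ
  have symmetric_part :
      (LinearMap.id - sw12) ∘ₗ (lT α Δ ∘ₗ γ + sw12 ∘ₗ (lT α Δ ∘ₗ γ)) = 0 := by
    rw [LinearMap.sub_comp, LinearMap.id_comp, LinearMap.comp_add, ← LinearMap.comp_assoc _ sw12,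
      sw12_comp_sw12, LinearMap.id_comp]
    abel
  calc skewCoassociator α Δ γ + skewCoassociator α γ Δ
      = (LinearMap.id - sw12) ∘ₗ (rT γ α ∘ₗ Δ) -
          (LinearMap.id - sw12) ∘ₗ (lT α Δ ∘ₗ γ + sw12 ∘ₗ (lT α Δ ∘ₗ γ)) := by
        rw [skewCoassociator, skewCoassociator, homCoassociator, homCoassociator, coderivation,
          ← LinearMap.comp_add, ← LinearMap.comp_sub]
        congr 1
        abel
    _ = rT γ α ∘ₗ Δ + rT γ α ∘ₗ Δ := by
        rw [symmetric_part, sub_zero, id_sub_sw12_comp_rT_comp_of_skew hγ]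

end Skew

namespace IsHomLieCoalgebra

variable {γ : V →ₗ[K] V ⊗[K] V} {α : V →ₗ[K] V}

theorem tw_comp (h : IsHomLieCoalgebra γ α) : tw ∘ₗ γ = -γ :=
  (neg_eq_iff_eq_neg.mpr h.1).symm

theorem coderivationDefect_self (h : IsHomLieCoalgebra γ α) : coderivationDefect γ α γ = 0 := by
  rw [← homCoJacobi_eq_coderivationDefect h.tw_comp, h.2.2]

theorem neg (h : IsHomLieCoalgebra γ α) : IsHomLieCoalgebra (-γ) α := by
  obtain ⟨skew, comultiplicative, coJacobi⟩ := h
  refine ⟨?_, ?_, ?_⟩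
  · rw [LinearMap.comp_neg, ← skew]
  · rw [LinearMap.neg_comp, comultiplicative, LinearMap.comp_neg]
  · simp only [lT_neg, LinearMap.neg_comp, LinearMap.comp_neg, neg_neg, coJacobi]

end IsHomLieCoalgebra

theorem postHomLieCoalgebra_shift_general {γ Δ : V →ₗ[K] V ⊗[K] V} {α : V →ₗ[K] V}
    (h : IsPostHomLieCoalgebra γ Δ α) : IsPostHomLieCoalgebra (-γ) (Δ + γ) α := by
  obtain ⟨homLie, coderivation, post⟩ := isPostHomLieCoalgebra_iff.mp h
  refine isPostHomLieCoalgebra_iff.mpr ⟨homLie.neg, ?_, ?_⟩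
  · rw [coderivationDefect_neg_left, coderivationDefect_add, coderivation,
      homLie.coderivationDefect_self, add_zero, neg_zero]
  · calc skewCoassociator α (Δ + γ) (Δ + γ) + rT (-γ) α ∘ₗ (Δ + γ)
        = skewCoassociator α Δ Δ + rT γ α ∘ₗ γ + (rT γ α ∘ₗ Δ + rT γ α ∘ₗ Δ) -
            (rT γ α ∘ₗ Δ + rT γ α ∘ₗ γ) := by
          rw [skewCoassociator_add_add,
            skewCoassociator_self_of_skew homLie.tw_comp homLie.coderivationDefect_self,
            skewCoassociator_add_swap_of_skew homLie.tw_comp coderivation, rT_neg,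
            LinearMap.neg_comp, LinearMap.comp_add, sub_eq_add_neg]
      _ = skewCoassociator α Δ Δ + rT γ α ∘ₗ Δ := by abel
      _ = 0 := post

end Field

/-- From a post-Hom-Lie coalgebra `(C, γ, Δ, α)` one gets a new one with
`Δ̃ = Δ + γ` and `γ̃ = -γ`. -/
theorem postHomLieCoalgebra_shift
    (γ Δ : C →ₗ[F] C ⊗[F] C) (α : C →ₗ[F] C)
    (h : IsPostHomLieCoalgebra γ Δ α) :
    IsPostHomLieCoalgebra (-γ) (Δ + γ) α :=
  postHomLieCoalgebra_shift_general h
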